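/- Let K be a field of characteristic zero, α, β ∈ K with β ≠ 0, and suppose λ, μ ∈ K are the roots of t² − αt − β. In A = A(α,β,0) set ω = DU − λUD and let K' = {f ∈ A : (1 + Uω)f ∈ DA}. Then K' = D²A + (DUω + λ⁻¹μω² + μ²D)A, and K' is a right ideal of A that is stably free but not free as a right A-module. -/

import Mathlib

noncomputable section

/-- Defining relations of the down-up algebra `A(α,β,γ)`:
`D = ι 0`, `U = ι 1`, relations `DU² = αUDU + βU²D + γU` and `D²U = αDUD + βUD² + γD`. -/
inductive DownUpRel (K : Type) [Field K] (a b g : K) :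
    FreeAlgebra K (Fin 2) → FreeAlgebra K (Fin 2) → Prop
  | rel1 : DownUpRel K a b g
      (FreeAlgebra.ι K (0 : Fin 2) * FreeAlgebra.ι K (1 : Fin 2) * FreeAlgebra.ι K (1 : Fin 2))
      (a • (FreeAlgebra.ι K (1 : Fin 2) * FreeAlgebra.ι K (0 : Fin 2) * FreeAlgebra.ι K (1 : Fin 2)) +
       b • (FreeAlgebra.ι K (1 : Fin 2) * FreeAlgebra.ι K (1 : Fin 2) * FreeAlgebra.ι K (0 : Fin 2)) +
       g • FreeAlgebra.ι K (1 : Fin 2))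
  | rel2 : DownUpRel K a b g
      (FreeAlgebra.ι K (0 : Fin 2) * FreeAlgebra.ι K (0 : Fin 2) * FreeAlgebra.ι K (1 : Fin 2))
      (a • (FreeAlgebra.ι K (0 : Fin 2) * FreeAlgebra.ι K (1 : Fin 2) * FreeAlgebra.ι K (0 : Fin 2)) +
       b • (FreeAlgebra.ι K (1 : Fin 2) * FreeAlgebra.ι K (0 : Fin 2) * FreeAlgebra.ι K (0 : Fin 2)) +
       g • FreeAlgebra.ι K (0 : Fin 2))

/-- The down-up algebra `A(α,β,γ)`. -/
abbrev DownUp (K : Type) [Field K] (a b g : K) := RingQuot (DownUpRel K a b g)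

/-- The generator `D` of `A(α,β,γ)`. -/
def DownUp.D (K : Type) [Field K] (a b g : K) : DownUp K a b g :=
  RingQuot.mkAlgHom K (DownUpRel K a b g) (FreeAlgebra.ι K (0 : Fin 2))

/-- The generator `U` of `A(α,β,γ)`. -/
def DownUp.U (K : Type) [Field K] (a b g : K) : DownUp K a b g :=
  RingQuot.mkAlgHom K (DownUpRel K a b g) (FreeAlgebra.ι K (1 : Fin 2))

/-- A right `A`-module `P` (realized as a left `Aᵐᵒᵖ`-module) is stably free if
`P ⊕ Aⁿ ≅ Aᵐ` as right `A`-modules for some naturals `n m`. -/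
def IsStablyFreeRight (A : Type) [Ring A] (P : Type) [AddCommGroup P] [Module Aᵐᵒᵖ P] : Prop :=
  ∃ n m : ℕ, Nonempty ((P × (Fin n → A)) ≃ₗ[Aᵐᵒᵖ] (Fin m → A))

/-- Left multiplication by `r` as an endomorphism of `A` viewed as a right `A`-module
(i.e. as a left `Aᵐᵒᵖ`-module). -/
def leftMulRight {A : Type} [Ring A] (r : A) : A →ₗ[Aᵐᵒᵖ] A where
  toFun x := r * x
  map_add' := mul_add r
  map_smul' m x := by
    simp only [MulOpposite.smul_eq_mul_unop, RingHom.id_apply, mul_assoc]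

/-- The element `ω = DU − λUD` of `A(α,β,0)`. -/
def omega0 (K : Type) [Field K] (α β lam : K) : DownUp K α β 0 :=
  DownUp.D K α β 0 * DownUp.U K α β 0 - lam • (DownUp.U K α β 0 * DownUp.D K α β 0)

/-- The right ideal `K' = {f ∈ A : (1 + Uω)f ∈ DA}` of `A = A(α,β,0)`. -/
def idealK' (K : Type) [Field K] (α β lam : K) :
    Submodule (DownUp K α β 0)ᵐᵒᵖ (DownUp K α β 0) :=
  Submodule.comap (leftMulRight (1 + DownUp.U K α β 0 * omega0 K α β lam))
    (Submodule.span (DownUp K α β 0)ᵐᵒᵖ {DownUp.D K α β 0})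

set_option linter.all false
section Part1

variable {K A : Type} [Field K] [Ring A] [Algebra K A] {l μ : K} {D U w : A}

/-- Explicit right inverse of the row `(1 + Uω, D)`. -/
theorem du_unimod (hl : l ≠ 0) (hμ : μ ≠ 0) (h1 : D * U = l • (U * D) + w)
    (h2 : w * U = μ • (U * w)) (h3 : D * w = μ • (w * D)) :
    (1 + U * w) * (1 - U * w - (l * μ⁻¹ ^ 2) • (D * U * U)) +
      D * ((μ⁻¹ ^ 3) • ((1 + U * w) * U * U) - (μ⁻¹ ^ 3 * (1 - l * μ)) • (U * U)) = 1 := by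
  have h1' : ∀ x, D * (U * x) = l • (U * (D * x)) + w * x := fun x => by
    rw [← mul_assoc, h1, add_mul, smul_mul_assoc, mul_assoc]
  have h2' : ∀ x, w * (U * x) = μ • (U * (w * x)) := fun x => by
    rw [← mul_assoc, h2, smul_mul_assoc, mul_assoc]
  have h3' : ∀ x, D * (w * x) = μ • (w * (D * x)) := fun x => by
    rw [← mul_assoc, h3, smul_mul_assoc, mul_assoc]
  simp only [mul_add, add_mul, mul_sub, sub_mul, one_mul, mul_one, mul_assoc, h1, h2, h3, h1', h2',
    h3', smul_mul_assoc, mul_smul_comm, smul_add, smul_smul]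
  match_scalars <;> field_simp <;> ring

theorem du_aD (hl : l ≠ 0) (hμ : μ ≠ 0) (h1 : D * U = l • (U * D) + w)
    (h2 : w * U = μ • (U * w)) (h3 : D * w = μ • (w * D)) :
    (1 - U * w - (l * μ⁻¹ ^ 2) • (D * U * U)) * D =
      D * D * ((-(l⁻¹ * μ⁻¹ ^ 2)) • (U * U)) +
      (D * U * w + (l⁻¹ * μ) • (w * w) + (μ ^ 2) • D) * ((μ⁻¹ ^ 2) • (1 : A)) := by
  have h1' : ∀ x, D * (U * x) = l • (U * (D * x)) + w * x := fun x => by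
    rw [← mul_assoc, h1, add_mul, smul_mul_assoc, mul_assoc]
  have h2' : ∀ x, w * (U * x) = μ • (U * (w * x)) := fun x => by
    rw [← mul_assoc, h2, smul_mul_assoc, mul_assoc]
  have h3' : ∀ x, D * (w * x) = μ • (w * (D * x)) := fun x => by
    rw [← mul_assoc, h3, smul_mul_assoc, mul_assoc]
  simp only [mul_add, add_mul, mul_sub, sub_mul, one_mul, mul_one, mul_assoc, h1, h2, h3, h1', h2',
    h3', smul_mul_assoc, mul_smul_comm, smul_add, smul_smul]
  match_scalars <;> field_simp <;> ring

theorem du_ar (hl : l ≠ 0) (hμ : μ ≠ 0) (h1 : D * U = l • (U * D) + w)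
    (h2 : w * U = μ • (U * w)) (h3 : D * w = μ • (w * D)) :
    1 - (1 - U * w - (l * μ⁻¹ ^ 2) • (D * U * U)) * (1 + U * w) =
      (D * U * w + (l⁻¹ * μ) • (w * w) + (μ ^ 2) • D) * ((l * μ⁻¹ ^ 4) • (U * U)) := by
  have h1' : ∀ x, D * (U * x) = l • (U * (D * x)) + w * x := fun x => by
    rw [← mul_assoc, h1, add_mul, smul_mul_assoc, mul_assoc]
  have h2' : ∀ x, w * (U * x) = μ • (U * (w * x)) := fun x => by
    rw [← mul_assoc, h2, smul_mul_assoc, mul_assoc]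
  have h3' : ∀ x, D * (w * x) = μ • (w * (D * x)) := fun x => by
    rw [← mul_assoc, h3, smul_mul_assoc, mul_assoc]
  simp only [mul_add, add_mul, mul_sub, sub_mul, one_mul, mul_one, mul_assoc, h1, h2, h3, h1', h2',
    h3', smul_mul_assoc, mul_smul_comm, smul_add, smul_smul]
  match_scalars <;> field_simp <;> ring

theorem du_rD2 (hl : l ≠ 0) (hμ : μ ≠ 0) (h1 : D * U = l • (U * D) + w)
    (h2 : w * U = μ • (U * w)) (h3 : D * w = μ • (w * D)) :
    (1 + U * w) * (D * D) = D * (D + (μ⁻¹ ^ 2 * l⁻¹ ^ 2) • (D * U * w)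
      - (μ⁻¹ ^ 3 * l⁻¹ ^ 2 * (l + μ)) • (w * w)) := by
  have h1' : ∀ x, D * (U * x) = l • (U * (D * x)) + w * x := fun x => by
    rw [← mul_assoc, h1, add_mul, smul_mul_assoc, mul_assoc]
  have h2' : ∀ x, w * (U * x) = μ • (U * (w * x)) := fun x => by
    rw [← mul_assoc, h2, smul_mul_assoc, mul_assoc]
  have h3' : ∀ x, D * (w * x) = μ • (w * (D * x)) := fun x => by
    rw [← mul_assoc, h3, smul_mul_assoc, mul_assoc]
  simp only [mul_add, add_mul, mul_sub, sub_mul, one_mul, mul_one, mul_assoc, h1, h2, h3, h1', h2',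
    h3', smul_mul_assoc, mul_smul_comm, smul_add, smul_smul]
  match_scalars <;> field_simp <;> ring

theorem du_rg (hl : l ≠ 0) (hμ : μ ≠ 0) (h1 : D * U = l • (U * D) + w)
    (h2 : w * U = μ • (U * w)) (h3 : D * w = μ • (w * D)) :
    (1 + U * w) * (D * U * w + (l⁻¹ * μ) • (w * w) + (μ ^ 2) • D) =
      D * (U * w + (μ ^ 2) • (1 : A) + (l⁻¹ * μ) • (U * w)
        + (l⁻¹ * μ⁻¹) • (U * w * U * w)) := by
  have h1' : ∀ x, D * (U * x) = l • (U * (D * x)) + w * x := fun x => by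
    rw [← mul_assoc, h1, add_mul, smul_mul_assoc, mul_assoc]
  have h2' : ∀ x, w * (U * x) = μ • (U * (w * x)) := fun x => by
    rw [← mul_assoc, h2, smul_mul_assoc, mul_assoc]
  have h3' : ∀ x, D * (w * x) = μ • (w * (D * x)) := fun x => by
    rw [← mul_assoc, h3, smul_mul_assoc, mul_assoc]
  simp only [mul_add, add_mul, mul_sub, sub_mul, one_mul, mul_one, mul_assoc, h1, h2, h3, h1', h2',
    h3', smul_mul_assoc, mul_smul_comm, smul_add, smul_smul]
  match_scalars <;> field_simp <;> ring

end Part1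

section Part2

open MvPolynomial

theorem skew_coeff_mul_of_unique {R G : Type} [Ring R] [Group G] [MulSemiringAction G R]
    (f g : SkewMonoidAlgebra R G) (a b : G) (h : UniqueMul f.support g.support a b) :
    (f * g).coeff (a * b) = f.coeff a * a • g.coeff b := by
  classical
  rw [SkewMonoidAlgebra.coeff_mul, SkewMonoidAlgebra.sum_def']
  simp_rw [SkewMonoidAlgebra.sum_def']
  rw [← Finset.sum_product']
  refine (Finset.sum_eq_single (a, b) ?_ ?_).trans (if_pos rfl) <;> simp_rw [Finset.mem_product]
  · refine fun ab hab hne ↦ if_neg (fun he ↦ hne <| Prod.ext ?_ ?_)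
    exacts [(h hab.1 hab.2 he).1, (h hab.1 hab.2 he).2]
  · refine fun hnotMem ↦ ite_eq_right_iff.mpr (fun _ ↦ ?_)
    rcases not_and_or.mp hnotMem with af | bg
    · rw [SkewMonoidAlgebra.notMem_support_iff.mp af, zero_mul]
    · rw [SkewMonoidAlgebra.notMem_support_iff.mp bg, smul_zero, mul_zero]

/-- Factors of a monomial are monomials. -/
theorem skew_factor_single {R G : Type} [Ring R] [IsDomain R] [Group G] [TwoUniqueProds G]
    [MulSemiringAction G R] (f g : SkewMonoidAlgebra R G) (c : G) (r : R) (hr : r ≠ 0)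
    (h : f * g = SkewMonoidAlgebra.single c r) :
    ∃ (a b : G) (x y : R), f = SkewMonoidAlgebra.single a x ∧ g = SkewMonoidAlgebra.single b y := by
  classical
  have hle : f.support.card * g.support.card ≤ 1 := by
    by_contra hc
    obtain ⟨p1, hp1, p2, hp2, hne, hu1, hu2⟩ :=
      TwoUniqueProds.uniqueMul_of_one_lt_card (not_le.1 hc)
    rw [Finset.mem_product] at hp1 hp2
    have key : ∀ p : G × G, p.1 ∈ f.support → p.2 ∈ g.support →
        UniqueMul f.support g.support p.1 p.2 → p.1 * p.2 = c := by
      intro p h1 h2 hu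
      have := skew_coeff_mul_of_unique f g p.1 p.2 hu
      rw [h, SkewMonoidAlgebra.coeff_single_apply] at this
      by_contra hpc
      rw [if_neg (Ne.symm hpc)] at this
      rcases mul_eq_zero.1 this.symm with h0 | h0
      · exact (SkewMonoidAlgebra.mem_support_iff.1 h1) h0
      · exact (SkewMonoidAlgebra.mem_support_iff.1 h2) ((smul_eq_zero_iff_eq _).1 h0)
    have e1 := key p1 hp1.1 hp1.2 hu1
    have e2 := key p2 hp2.1 hp2.2 hu2
    have := hu2 hp1.1 hp1.2 (e1.trans e2.symm)
    exact hne (Prod.ext this.1 this.2)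
  have hf0 : f ≠ 0 := by
    rintro rfl
    rw [zero_mul] at h
    exact hr (SkewMonoidAlgebra.single_eq_zero.1 h.symm)
  have hg0 : g ≠ 0 := by
    rintro rfl
    rw [mul_zero] at h
    exact hr (SkewMonoidAlgebra.single_eq_zero.1 h.symm)
  have hf1 : 0 < f.support.card := by
    rw [Finset.card_pos, Finset.nonempty_iff_ne_empty]
    exact fun hh => hf0 (SkewMonoidAlgebra.support_eq_empty.1 hh)
  have hg1 : 0 < g.support.card := by
    rw [Finset.card_pos, Finset.nonempty_iff_ne_empty]
    exact fun hh => hg0 (SkewMonoidAlgebra.support_eq_empty.1 hh)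
  have key : ∀ f : SkewMonoidAlgebra R G, f.support.card = 1 →
      ∃ a x, f = SkewMonoidAlgebra.single a x := by
    intro f hf
    obtain ⟨a, x, _, e⟩ := Finsupp.card_support_eq_one'.1 hf
    exact ⟨a, x, SkewMonoidAlgebra.coeff_injective e⟩
  obtain ⟨a, x, e1⟩ := key f (by nlinarith)
  obtain ⟨b, y, e2⟩ := key g (by nlinarith)
  exact ⟨a, b, x, y, e1, e2⟩

end Part2

section Part3

open MvPolynomial

variable {K : Type} [Field K] {α β l μ : K}

/-- The structural relations of the down-up algebra. -/
theorem du_rels (hsum : l + μ = α) (hprod : l * μ = -β) :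
    (DownUp.D K α β 0 * DownUp.U K α β 0 =
      l • (DownUp.U K α β 0 * DownUp.D K α β 0) + omega0 K α β l) ∧
    (omega0 K α β l * DownUp.U K α β 0 = μ • (DownUp.U K α β 0 * omega0 K α β l)) ∧
    (DownUp.D K α β 0 * omega0 K α β l = μ • (omega0 K α β l * DownUp.D K α β 0)) := by
  have r1 := RingQuot.mkAlgHom_rel K (DownUpRel.rel1 (K := K) (a := α) (b := β) (g := 0))
  have r2 := RingQuot.mkAlgHom_rel K (DownUpRel.rel2 (K := K) (a := α) (b := β) (g := 0))
  simp only [map_mul, map_add, map_smul, zero_smul, add_zero] at r1 r2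
  change DownUp.D K α β 0 * DownUp.U K α β 0 * DownUp.U K α β 0 =
    α • (DownUp.U K α β 0 * DownUp.D K α β 0 * DownUp.U K α β 0) +
    β • (DownUp.U K α β 0 * DownUp.U K α β 0 * DownUp.D K α β 0) at r1
  change DownUp.D K α β 0 * DownUp.D K α β 0 * DownUp.U K α β 0 =
    α • (DownUp.D K α β 0 * DownUp.U K α β 0 * DownUp.D K α β 0) +
    β • (DownUp.U K α β 0 * DownUp.D K α β 0 * DownUp.D K α β 0) at r2
  obtain rfl : β = -(l * μ) := by rw [hprod, neg_neg]
  subst hsum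
  unfold omega0
  generalize DownUp.D K (l + μ) (-(l * μ)) 0 = D at *
  generalize DownUp.U K (l + μ) (-(l * μ)) 0 = U at *
  refine ⟨by abel, ?_, ?_⟩
  · rw [sub_mul, r1, mul_sub, smul_mul_assoc, mul_smul_comm]
    simp only [mul_assoc]
    module
  · rw [mul_sub, ← mul_assoc, r2, sub_mul, smul_mul_assoc, mul_smul_comm]
    simp only [mul_assoc]
    module

/-- A subspace containing `1` and stable under right multiplication by `D`, `U` is everything. -/
theorem du_span (S : Submodule K (DownUp K α β 0)) (h1 : 1 ∈ S)
    (hD : ∀ x ∈ S, x * DownUp.D K α β 0 ∈ S) (hU : ∀ x ∈ S, x * DownUp.U K α β 0 ∈ S)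
    (a : DownUp K α β 0) : a ∈ S := by
  suffices H : ∀ x ∈ S, x * a ∈ S by simpa using H 1 h1
  obtain ⟨a, rfl⟩ := RingQuot.mkAlgHom_surjective K (DownUpRel K α β 0) a
  induction a using FreeAlgebra.induction with
  | grade0 r =>
    intro x hx
    rw [AlgHom.commutes, ← Algebra.commutes, ← Algebra.smul_def]
    exact S.smul_mem _ hx
  | grade1 i =>
    intro x hx
    fin_cases i
    · exact hD x hx
    · exact hU x hx
  | mul a b ha hb =>
    intro x hx
    rw [map_mul, ← mul_assoc]
    exact hb _ (ha _ hx)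
  | add a b ha hb =>
    intro x hx
    rw [map_add, mul_add]
    exact S.add_mem (ha _ hx) (hb _ hx)

/-- The commutative subalgebra generated by `UD` and `ω`. -/
theorem du_iota (hsum : l + μ = α) (hprod : l * μ = -β) :
    ∃ j : MvPolynomial (Fin 2) K →ₐ[K] DownUp K α β 0,
      j (X 0) = DownUp.U K α β 0 * DownUp.D K α β 0 ∧ j (X 1) = omega0 K α β l := by
  obtain ⟨r1, r2, r3⟩ := du_rels hsum hprod
  generalize DownUp.D K α β 0 = D at *
  generalize DownUp.U K α β 0 = U at *
  generalize omega0 K α β l = w at *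
  have hc : w * (U * D) = U * D * w := by
    rw [← mul_assoc, r2, mul_assoc, r3, smul_mul_assoc, mul_smul_comm, mul_assoc]
  have hcomm : ∀ a ∈ ({U * D, w} : Set (DownUp K α β 0)), ∀ b ∈ ({U * D, w} : Set (DownUp K α β 0)),
      a * b = b * a := by
    rintro a (rfl | rfl) b (rfl | rfl)
    · rfl
    · exact hc.symm
    · exact hc
    · rfl
  have := Algebra.isMulCommutative_adjoin K hcomm
  let _ : CommRing (Algebra.adjoin K ({U * D, w} : Set (DownUp K α β 0))) :=
    { (inferInstance : Ring (Algebra.adjoin K ({U * D, w} : Set (DownUp K α β 0)))) with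
      mul_comm := this.is_comm.comm }
  let f : MvPolynomial (Fin 2) K →ₐ[K] Algebra.adjoin K ({U * D, w} : Set (DownUp K α β 0)) :=
    MvPolynomial.aeval ![⟨U * D, Algebra.subset_adjoin (by simp)⟩, ⟨w, Algebra.subset_adjoin (by simp)⟩]
  refine ⟨(Algebra.adjoin K ({U * D, w} : Set (DownUp K α β 0))).val.comp f, ?_, ?_⟩
  · simp [f]
  · simp [f]

end Part3

section Part4

open MvPolynomial

variable {K : Type} [Field K] {α β l μ : K}
variable [MulSemiringAction (Multiplicative ℤ) (MvPolynomial (Fin 2) K)]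
  [SMulCommClass (Multiplicative ℤ) K (MvPolynomial (Fin 2) K)]

/-- The generator of the infinite cyclic group. -/
abbrev sgen : Multiplicative ℤ := Multiplicative.ofAdd 1

/-- The skew Laurent polynomial ring. -/
abbrev SkB (K : Type) [Field K] := SkewMonoidAlgebra (MvPolynomial (Fin 2) K) (Multiplicative ℤ)

theorem sgen_smul_algebraMap (g : Multiplicative ℤ) (c : K) :
    g • (C c : MvPolynomial (Fin 2) K) = C c :=
  smul_algebraMap g c

/-- The embedding of the down-up algebra in the skew Laurent polynomial ring. -/
theorem du_phi (hsum : l + μ = α) (hprod : l * μ = -β)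
    (h0 : sgen • (X 0 : MvPolynomial (Fin 2) K) = l • X 0 + X 1)
    (h1 : sgen • (X 1 : MvPolynomial (Fin 2) K) = μ • X 1) :
    ∃ φ : DownUp K α β 0 →ₐ[K] SkB K,
      φ (DownUp.D K α β 0) = SkewMonoidAlgebra.single sgen 1 ∧
      φ (DownUp.U K α β 0) = SkewMonoidAlgebra.single sgen⁻¹ (X 0) := by
  have hq : sgen • (X 0 : MvPolynomial (Fin 2) K) = α • X 0 + β • (sgen⁻¹ • X 0) := by
    apply MulAction.injective (sgen : Multiplicative ℤ)
    simp only
    rw [smul_add, smul_comm sgen α, smul_comm sgen β, smul_inv_smul, h0, smul_add,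
      smul_comm sgen l, h0, h1]
    obtain rfl : β = -(l * μ) := by rw [hprod, neg_neg]
    subst hsum
    module
  let f : FreeAlgebra K (Fin 2) →ₐ[K] SkB K := FreeAlgebra.lift K
    ![SkewMonoidAlgebra.single sgen 1, SkewMonoidAlgebra.single sgen⁻¹ (X 0)]
  have hf : ∀ ⦃x y⦄, DownUpRel K α β 0 x y → f x = f y := by
    rintro x y (_ | _)
    · simp only [f, map_mul, map_add, map_smul, FreeAlgebra.lift_ι_apply, Matrix.cons_val_zero,
        Matrix.cons_val_one, SkewMonoidAlgebra.single_mul_single, zero_smul, add_zero,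
        SkewMonoidAlgebra.smul_single, mul_one, one_mul, mul_inv_cancel, inv_mul_cancel, smul_one,
        one_smul, hq]
      rw [inv_mul_cancel_right, ← SkewMonoidAlgebra.single_add]
      congr 1
      rw [add_mul, smul_mul_assoc, smul_mul_assoc, mul_comm (sgen⁻¹ • X 0) (X 0)]
    · simp only [f, map_mul, map_add, map_smul, FreeAlgebra.lift_ι_apply, Matrix.cons_val_zero,
        Matrix.cons_val_one, SkewMonoidAlgebra.single_mul_single, zero_smul, add_zero,
        SkewMonoidAlgebra.smul_single, mul_one, one_mul, mul_inv_cancel, inv_mul_cancel, smul_one,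
        one_smul, hq]
      rw [mul_inv_cancel_right, mul_smul, hq, ← SkewMonoidAlgebra.single_add]
      congr 1
      rw [smul_add, smul_comm sgen α, smul_comm sgen β, smul_inv_smul, hq]
  refine ⟨RingQuot.liftAlgHom K ⟨f, hf⟩, ?_, ?_⟩
  · simp [DownUp.D, f]
  · simp [DownUp.U, f]

theorem du_D_comm (hsum : l + μ = α) (hprod : l * μ = -β)
    (h0 : sgen • (X 0 : MvPolynomial (Fin 2) K) = l • X 0 + X 1)
    (h1 : sgen • (X 1 : MvPolynomial (Fin 2) K) = μ • X 1)
    (j : MvPolynomial (Fin 2) K →ₐ[K] DownUp K α β 0)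
    (j0 : j (X 0) = DownUp.U K α β 0 * DownUp.D K α β 0) (j1 : j (X 1) = omega0 K α β l)
    (f : MvPolynomial (Fin 2) K) :
    DownUp.D K α β 0 * j f = j (sgen • f) * DownUp.D K α β 0 := by
  obtain ⟨r1, r2, r3⟩ := du_rels hsum hprod
  induction f using MvPolynomial.induction_on with
  | C c =>
    rw [sgen_smul_algebraMap, ← MvPolynomial.algebraMap_eq, AlgHom.commutes]
    exact (Algebra.commutes c _).symm
  | add p q hp hq => rw [map_add, mul_add, hp, hq, smul_add, map_add, add_mul]
  | mul_X p i hp =>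
    rw [map_mul, ← mul_assoc, hp, smul_mul', map_mul, mul_assoc, mul_assoc]
    congr 1
    fin_cases i
    · change _ * j (X 0) = j (sgen • X 0) * _
      rw [h0, map_add, map_smul, j0, j1, ← r1, mul_assoc]
    · change _ * j (X 1) = j (sgen • X 1) * _
      rw [h1, map_smul, j1, r3, smul_mul_assoc]

theorem du_U_comm (hsum : l + μ = α) (hprod : l * μ = -β)
    (h0 : sgen • (X 0 : MvPolynomial (Fin 2) K) = l • X 0 + X 1)
    (h1 : sgen • (X 1 : MvPolynomial (Fin 2) K) = μ • X 1)
    (j : MvPolynomial (Fin 2) K →ₐ[K] DownUp K α β 0)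
    (j0 : j (X 0) = DownUp.U K α β 0 * DownUp.D K α β 0) (j1 : j (X 1) = omega0 K α β l)
    (f : MvPolynomial (Fin 2) K) :
    DownUp.U K α β 0 * j f = j (sgen⁻¹ • f) * DownUp.U K α β 0 := by
  obtain ⟨r1, r2, r3⟩ := du_rels hsum hprod
  suffices H : ∀ f, DownUp.U K α β 0 * j (sgen • f) = j f * DownUp.U K α β 0 by
    rw [← H, smul_inv_smul]
  intro f
  induction f using MvPolynomial.induction_on with
  | C c =>
    rw [sgen_smul_algebraMap, ← MvPolynomial.algebraMap_eq, AlgHom.commutes]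
    exact (Algebra.commutes c _).symm
  | add p q hp hq => rw [map_add, add_mul, ← hp, ← hq, smul_add, map_add, mul_add]
  | mul_X p i hp =>
    rw [smul_mul', map_mul, ← mul_assoc, hp, map_mul, mul_assoc, mul_assoc]
    congr 1
    fin_cases i
    · change _ * j (sgen • X 0) = j (X 0) * _
      rw [h0, map_add, map_smul, j0, j1, ← r1, mul_assoc]
    · change _ * j (sgen • X 1) = j (X 1) * _
      rw [h1, map_smul, j1, r2, mul_smul_comm]

/-- Monomials `D^n` (`n ≥ 0`) and `U^(-n)` (`n ≤ 0`). -/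
def duE (K : Type) [Field K] (α β : K) (n : ℤ) : DownUp K α β 0 :=
  DownUp.D K α β 0 ^ n.toNat * DownUp.U K α β 0 ^ (-n).toNat

theorem duE_nat (n : ℕ) : duE K α β n = DownUp.D K α β 0 ^ n := by
  simp [duE]

theorem duE_neg (n : ℕ) : duE K α β (-n) = DownUp.U K α β 0 ^ n := by
  simp [duE]

theorem du_D_pow_comm (j : MvPolynomial (Fin 2) K →ₐ[K] DownUp K α β 0)
    (hj : ∀ f, DownUp.D K α β 0 * j f = j (sgen • f) * DownUp.D K α β 0)
    (n : ℕ) (f : MvPolynomial (Fin 2) K) :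
    DownUp.D K α β 0 ^ n * j f = j (sgen ^ n • f) * DownUp.D K α β 0 ^ n := by
  induction n generalizing f with
  | zero => simp
  | succ n ih => rw [pow_succ, mul_assoc, hj, ← mul_assoc, ih, mul_assoc, pow_succ, mul_smul]

theorem du_U_pow_comm (j : MvPolynomial (Fin 2) K →ₐ[K] DownUp K α β 0)
    (hj : ∀ f, DownUp.U K α β 0 * j f = j (sgen⁻¹ • f) * DownUp.U K α β 0)
    (n : ℕ) (f : MvPolynomial (Fin 2) K) :
    DownUp.U K α β 0 ^ n * j f = j (sgen⁻¹ ^ n • f) * DownUp.U K α β 0 ^ n := by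
  induction n generalizing f with
  | zero => simp
  | succ n ih => rw [pow_succ, mul_assoc, hj, ← mul_assoc, ih, mul_assoc, pow_succ, mul_smul]

/-- The spanning map. -/
def duPsi (j : MvPolynomial (Fin 2) K →ₐ[K] DownUp K α β 0) :
    (ℤ →₀ MvPolynomial (Fin 2) K) →ₗ[K] DownUp K α β 0 :=
  Finsupp.lsum K (fun n => (LinearMap.mulRight K (duE K α β n)) ∘ₗ j.toLinearMap)

theorem duPsi_single (j : MvPolynomial (Fin 2) K →ₐ[K] DownUp K α β 0) (n : ℤ)
    (f : MvPolynomial (Fin 2) K) :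
    duPsi j (Finsupp.single n f) = j f * duE K α β n := by
  simp [duPsi]

theorem duPsi_surj (hsum : l + μ = α) (hprod : l * μ = -β)
    (h0 : sgen • (X 0 : MvPolynomial (Fin 2) K) = l • X 0 + X 1)
    (h1 : sgen • (X 1 : MvPolynomial (Fin 2) K) = μ • X 1)
    (j : MvPolynomial (Fin 2) K →ₐ[K] DownUp K α β 0)
    (j0 : j (X 0) = DownUp.U K α β 0 * DownUp.D K α β 0) (j1 : j (X 1) = omega0 K α β l) :
    Function.Surjective (duPsi j) := by
  have hD := du_D_pow_comm j (du_D_comm hsum hprod h0 h1 j j0 j1)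
  have hU := du_U_pow_comm j (du_U_comm hsum hprod h0 h1 j j0 j1)
  have jd : j (sgen • X 0) = DownUp.D K α β 0 * DownUp.U K α β 0 := by
    rw [h0, map_add, map_smul, j0, j1, ← (du_rels hsum hprod).1]
  have hmem : ∀ n f, j f * duE K α β n ∈ LinearMap.range (duPsi j) := fun n f =>
    ⟨Finsupp.single n f, duPsi_single j n f⟩
  intro a
  refine du_span (LinearMap.range (duPsi j)) ?_ ?_ ?_ a
  · have := hmem (0 : ℕ) 1
    rwa [duE_nat, map_one, pow_zero, mul_one] at this
  · rintro _ ⟨v, rfl⟩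
    induction v using Finsupp.induction_linear with
    | zero => simp
    | add f g hf hg => rw [map_add, add_mul]; exact Submodule.add_mem _ hf hg
    | single n f =>
      rw [duPsi_single, mul_assoc]
      obtain ⟨k, rfl | rfl⟩ := n.eq_nat_or_neg
      · rw [duE_nat, ← pow_succ, ← duE_nat]
        exact hmem _ _
      · cases k with
        | zero =>
          have := hmem (1 : ℕ) f
          rw [duE_nat, pow_one] at this
          simpa [duE] using this
        | succ k =>
          rw [duE_neg, pow_succ, mul_assoc, ← j0, hU, ← mul_assoc, ← map_mul, ← duE_neg]
          exact hmem _ _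
  · rintro _ ⟨v, rfl⟩
    induction v using Finsupp.induction_linear with
    | zero => simp
    | add f g hf hg => rw [map_add, add_mul]; exact Submodule.add_mem _ hf hg
    | single n f =>
      rw [duPsi_single, mul_assoc]
      obtain ⟨k, rfl | rfl⟩ := n.eq_nat_or_neg
      · cases k with
        | zero =>
          have := hmem (-(1 : ℕ)) f
          rw [duE_neg, pow_one] at this
          simpa [duE] using this
        | succ k =>
          rw [duE_nat, pow_succ, mul_assoc, ← jd, hD, ← mul_assoc, ← map_mul, ← duE_nat]
          exact hmem _ _
      · rw [duE_neg, ← pow_succ, ← duE_neg]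
        exact hmem _ _

theorem du_phi_j (j : MvPolynomial (Fin 2) K →ₐ[K] DownUp K α β 0)
    (j0 : j (X 0) = DownUp.U K α β 0 * DownUp.D K α β 0) (j1 : j (X 1) = omega0 K α β l)
    (h0 : sgen • (X 0 : MvPolynomial (Fin 2) K) = l • X 0 + X 1)
    (φ : DownUp K α β 0 →ₐ[K] SkB K)
    (φD : φ (DownUp.D K α β 0) = SkewMonoidAlgebra.single sgen 1)
    (φU : φ (DownUp.U K α β 0) = SkewMonoidAlgebra.single sgen⁻¹ (X 0))
    (f : MvPolynomial (Fin 2) K) : φ (j f) = SkewMonoidAlgebra.single 1 f := by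
  induction f using MvPolynomial.induction_on with
  | C c =>
    rw [← MvPolynomial.algebraMap_eq, AlgHom.commutes, AlgHom.commutes]
    simp [MvPolynomial.algebraMap_eq]
  | add p q hp hq => rw [map_add, map_add, hp, hq, SkewMonoidAlgebra.single_add]
  | mul_X p i hp =>
    have key : φ (j (X i)) = SkewMonoidAlgebra.single 1 (X i) := by
      fin_cases i
      · change φ (j (X 0)) = SkewMonoidAlgebra.single 1 (X 0)
        rw [j0, map_mul, φD, φU, SkewMonoidAlgebra.single_mul_single]
        simp
      · change φ (j (X 1)) = SkewMonoidAlgebra.single 1 (X 1)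
        rw [j1, omega0, map_sub, map_smul, map_mul, map_mul, φD, φU,
          SkewMonoidAlgebra.single_mul_single, SkewMonoidAlgebra.single_mul_single,
          SkewMonoidAlgebra.smul_single, h0]
        simp
    rw [map_mul, map_mul, hp, key, SkewMonoidAlgebra.single_mul_single]
    simp

theorem du_phi_E (φ : DownUp K α β 0 →ₐ[K] SkB K)
    (φD : φ (DownUp.D K α β 0) = SkewMonoidAlgebra.single sgen 1)
    (φU : φ (DownUp.U K α β 0) = SkewMonoidAlgebra.single sgen⁻¹ (X 0)) (n : ℤ) :
    ∃ c : MvPolynomial (Fin 2) K, c ≠ 0 ∧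
      φ (duE K α β n) = SkewMonoidAlgebra.single (Multiplicative.ofAdd n) c := by
  obtain ⟨k, rfl | rfl⟩ := n.eq_nat_or_neg
  · refine ⟨1, one_ne_zero, ?_⟩
    rw [duE_nat, map_pow, φD]
    induction k with
    | zero => simp
    | succ k ih =>
      rw [pow_succ, ih, SkewMonoidAlgebra.single_mul_single]
      simp [← ofAdd_add]
  · rw [duE_neg, map_pow, φU]
    induction k with
    | zero => exact ⟨1, one_ne_zero, by simp⟩
    | succ k ih =>
      obtain ⟨c, hc, e⟩ := ih
      refine ⟨c * Multiplicative.ofAdd (-(k : ℤ)) • X 0, mul_ne_zero hc ?_, ?_⟩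
      · rw [Ne, smul_eq_zero_iff_eq]
        exact X_ne_zero 0
      · rw [pow_succ, e, SkewMonoidAlgebra.single_mul_single]
        congr 1
        rw [← ofAdd_neg, ← ofAdd_add]
        congr 1
        push_cast
        ring

theorem du_phi_inj (hsum : l + μ = α) (hprod : l * μ = -β)
    (h0 : sgen • (X 0 : MvPolynomial (Fin 2) K) = l • X 0 + X 1)
    (h1 : sgen • (X 1 : MvPolynomial (Fin 2) K) = μ • X 1)
    (φ : DownUp K α β 0 →ₐ[K] SkB K)
    (φD : φ (DownUp.D K α β 0) = SkewMonoidAlgebra.single sgen 1)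
    (φU : φ (DownUp.U K α β 0) = SkewMonoidAlgebra.single sgen⁻¹ (X 0)) :
    Function.Injective φ := by
  classical
  obtain ⟨j, j0, j1⟩ := du_iota (K := K) hsum hprod
  choose c hc hE using du_phi_E φ φD φU
  have key : ∀ v (n : ℤ), (φ (duPsi j v)).coeff (Multiplicative.ofAdd n) = v n * c n := by
    intro v n
    induction v using Finsupp.induction_linear with
    | zero => simp
    | add f g hf hg =>
      rw [map_add, map_add, SkewMonoidAlgebra.coeff_add, Finsupp.add_apply, hf, hg,
        Finsupp.add_apply, add_mul]
    | single m f =>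
      rw [duPsi_single, map_mul, du_phi_j j j0 j1 h0 φ φD φU, hE,
        SkewMonoidAlgebra.single_mul_single, one_mul, one_smul, SkewMonoidAlgebra.coeff_single,
        Finsupp.single_apply, Finsupp.single_apply]
      by_cases hmn : m = n
      · subst hmn; simp
      · simp [hmn]
  rw [injective_iff_map_eq_zero]
  intro a ha
  obtain ⟨v, rfl⟩ := duPsi_surj hsum hprod h0 h1 j j0 j1 a
  have : v = 0 := by
    ext1 n
    have := key v n
    rw [ha, SkewMonoidAlgebra.coeff_zero, Finsupp.zero_apply] at this
    exact (mul_eq_zero.1 this.symm).resolve_right (hc n)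
  rw [this, map_zero]

theorem du_D_reg (hsum : l + μ = α) (hprod : l * μ = -β)
    (h0 : sgen • (X 0 : MvPolynomial (Fin 2) K) = l • X 0 + X 1)
    (h1 : sgen • (X 1 : MvPolynomial (Fin 2) K) = μ • X 1) (x : DownUp K α β 0)
    (hx : DownUp.D K α β 0 * x = 0) : x = 0 := by
  obtain ⟨φ, φD, φU⟩ := du_phi hsum hprod h0 h1
  apply du_phi_inj hsum hprod h0 h1 φ φD φU
  have h := congrArg φ hx
  rw [map_mul, φD, map_zero] at h
  have h2 := congrArg (fun y => SkewMonoidAlgebra.single sgen⁻¹ 1 * y) h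
  simp only [mul_zero, ← mul_assoc, SkewMonoidAlgebra.single_mul_single] at h2
  rw [map_zero]
  simpa using h2

/-- Coefficients of negative degree of elements of the image are divisible by `X 0`. -/
theorem du_phi_coeff (φ : DownUp K α β 0 →ₐ[K] SkB K)
    (φD : φ (DownUp.D K α β 0) = SkewMonoidAlgebra.single sgen 1)
    (φU : φ (DownUp.U K α β 0) = SkewMonoidAlgebra.single sgen⁻¹ (X 0))
    (a : DownUp K α β 0) (n : ℤ) (hn : n < 0) :
    X 0 ∣ (φ a).coeff (Multiplicative.ofAdd n) := by
  let S : Submodule K (DownUp K α β 0) :=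
    { carrier := {a | ∀ n : ℤ, n < 0 → X 0 ∣ (φ a).coeff (Multiplicative.ofAdd n)}
      zero_mem' := fun n _ => by simp
      add_mem' := fun {a b} ha hb n hn => by
        rw [map_add, SkewMonoidAlgebra.coeff_add, Finsupp.add_apply]
        exact dvd_add (ha n hn) (hb n hn)
      smul_mem' := fun c a ha n hn => by
        rw [map_smul, SkewMonoidAlgebra.coeff_smul, Finsupp.smul_apply, MvPolynomial.smul_eq_C_mul]
        exact (ha n hn).mul_left _ }
  refine du_span S ?_ ?_ ?_ a n hn
  · intro n hn
    have : Multiplicative.ofAdd n ≠ 1 := fun h => hn.ne (by simpa using h)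
    rw [map_one, SkewMonoidAlgebra.coeff_one, Finsupp.single_eq_of_ne this]
    exact dvd_zero _
  · intro x hx n hn
    rw [map_mul, φD, SkewMonoidAlgebra.coeff_mul_single]
    refine Dvd.dvd.mul_right ?_ _
    exact hx (n - 1) (by omega)
  · intro x hx n hn
    rw [map_mul, φU, SkewMonoidAlgebra.coeff_mul_single, inv_inv, ← ofAdd_add]
    rcases eq_or_ne n (-1) with rfl | hne
    · simp
    · exact (hx (n + 1) (by omega)).mul_right _

theorem X0_not_unit : ¬ IsUnit (X 0 : MvPolynomial (Fin 2) K) := by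
  intro h
  have := h.map (MvPolynomial.constantCoeff (R := K) (σ := Fin 2))
  simp at this

theorem isUnit_of_smul (g : Multiplicative ℤ) (x : MvPolynomial (Fin 2) K)
    (h : IsUnit (g • x)) : IsUnit x := by
  have := h.map (MulSemiringAction.toRingHom (Multiplicative ℤ) (MvPolynomial (Fin 2) K) g⁻¹)
  simpa using this

theorem du_not_principal (hl : l ≠ 0) (hμ : μ ≠ 0) (hsum : l + μ = α) (hprod : l * μ = -β)
    (h0 : sgen • (X 0 : MvPolynomial (Fin 2) K) = l • X 0 + X 1)
    (h1 : sgen • (X 1 : MvPolynomial (Fin 2) K) = μ • X 1) (h x y v : DownUp K α β 0)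
    (e1 : DownUp.D K α β 0 * DownUp.D K α β 0 = h * x)
    (e2 : DownUp.D K α β 0 * DownUp.U K α β 0 * omega0 K α β l +
           (l⁻¹ * μ) • (omega0 K α β l * omega0 K α β l) +
           (μ ^ 2) • DownUp.D K α β 0 = h * y)
    (e3 : (1 + DownUp.U K α β 0 * omega0 K α β l) * h = DownUp.D K α β 0 * v) : False := by
  classical
  obtain ⟨φ, φD, φU⟩ := du_phi hsum hprod h0 h1
  have hT := du_phi_coeff φ φD φU
  have φw : φ (omega0 K α β l) = SkewMonoidAlgebra.single 1 (X 1) := by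
    rw [omega0, map_sub, map_smul, map_mul, map_mul, φD, φU,
      SkewMonoidAlgebra.single_mul_single, SkewMonoidAlgebra.single_mul_single,
      SkewMonoidAlgebra.smul_single, h0]
    simp
  apply_fun φ at e1 e2 e3
  simp only [map_mul, map_add, map_smul, map_one, φD, φU, φw] at e1 e2 e3
  rw [SkewMonoidAlgebra.single_mul_single, one_mul, smul_one] at e1
  obtain ⟨a, b, f, f', ef, ef'⟩ := skew_factor_single _ _ _ _ one_ne_zero e1.symm
  have hhT := hT h
  have hxT := hT x
  rw [ef] at e1 e2 e3 hhT
  rw [ef'] at e1 hxT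
  rw [SkewMonoidAlgebra.single_mul_single] at e1
  have hab : sgen * sgen = a * b ∧ 1 = f * a • f' := by
    have := congrArg SkewMonoidAlgebra.coeff e1
    rw [SkewMonoidAlgebra.coeff_single, SkewMonoidAlgebra.coeff_single,
      Finsupp.single_eq_single_iff] at this
    rcases this with h | h
    · exact h
    · exact absurd h.1 one_ne_zero
  obtain ⟨hab, hff⟩ := hab
  have uf : IsUnit f := IsUnit.of_mul_eq_one _ hff.symm
  have uf' : IsUnit f' := isUnit_of_smul a _ (IsUnit.of_mul_eq_one_right _ hff.symm)
  obtain ⟨m, rfl⟩ := Multiplicative.ofAdd.surjective a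
  obtain ⟨k, rfl⟩ := Multiplicative.ofAdd.surjective b
  have hmk : (1 : ℤ) + 1 = m + k := hab
  have hm : 0 ≤ m := by
    by_contra hm
    have := hhT m (by omega)
    rw [SkewMonoidAlgebra.coeff_single, Finsupp.single_eq_same] at this
    exact X0_not_unit (isUnit_of_dvd_unit this uf)
  have hk : 0 ≤ k := by
    by_contra hk
    have := hxT k (by omega)
    rw [SkewMonoidAlgebra.coeff_single, Finsupp.single_eq_same] at this
    exact X0_not_unit (isUnit_of_dvd_unit this uf')
  have hm2 : m ≤ 2 := by omega
  have hs : (sgen : Multiplicative ℤ) ≠ 1 := by decide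
  have hs' : (sgen⁻¹ : Multiplicative ℤ) ≠ 1 := by decide
  interval_cases m
  · obtain ⟨t, ht⟩ := hT v (-1) (by norm_num)
    have e := congrArg (fun z => SkewMonoidAlgebra.coeff z 1) e3
    simp only [SkewMonoidAlgebra.coeff_mul_single, SkewMonoidAlgebra.coeff_single_mul,
      SkewMonoidAlgebra.single_mul_single, SkewMonoidAlgebra.coeff_add] at e
    rw [mul_one, ← ofAdd_neg, ht] at e
    simp [hs, hs'] at e
    refine X0_not_unit (isUnit_of_smul sgen _ (isUnit_of_mul_isUnit_left (y := sgen • t) ?_))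
    rw [← e]
    exact uf
  · obtain ⟨t, ht⟩ := hT y (-1) (by norm_num)
    have e := congrArg (fun z => SkewMonoidAlgebra.coeff z 1) e2
    simp only [SkewMonoidAlgebra.coeff_single_mul,
      SkewMonoidAlgebra.single_mul_single, SkewMonoidAlgebra.coeff_add] at e
    have : ((Multiplicative.ofAdd 1)⁻¹ * 1 : Multiplicative ℤ) = Multiplicative.ofAdd (-1) := by
      decide
    rw [this, ht] at e
    simp [hs, hs', h0] at e
    have e' := congrArg (MvPolynomial.eval ![1, -l]) e
    simp only [map_add, map_mul, MvPolynomial.smul_eval, MvPolynomial.eval_X,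
      Matrix.cons_val_zero, Matrix.cons_val_one, mul_one, add_neg_cancel, zero_mul,
      mul_zero, zero_add] at e'
    have h3 : l⁻¹ * μ ≠ 0 := mul_ne_zero (inv_ne_zero hl) hμ
    exact mul_ne_zero h3 (mul_ne_zero (neg_ne_zero.2 hl) (neg_ne_zero.2 hl)) e'
  · obtain ⟨t, ht⟩ := hT y (-1) (by norm_num)
    have e := congrArg (fun z => SkewMonoidAlgebra.coeff z sgen) e2
    simp only [SkewMonoidAlgebra.coeff_single_mul,
      SkewMonoidAlgebra.single_mul_single, SkewMonoidAlgebra.coeff_add] at e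
    have : ((Multiplicative.ofAdd 2)⁻¹ * sgen : Multiplicative ℤ) = Multiplicative.ofAdd (-1) := by
      decide
    rw [this, ht] at e
    simp [hs, hs'] at e
    have hu : IsUnit ((μ ^ 2) • (1 : MvPolynomial (Fin 2) K)) := by
      rw [MvPolynomial.smul_eq_C_mul, mul_one]
      exact (IsUnit.mk0 _ (pow_ne_zero 2 hμ)).map MvPolynomial.C
    rw [e] at hu
    exact X0_not_unit (isUnit_of_smul _ _
      (isUnit_of_mul_isUnit_left (isUnit_of_mul_isUnit_right hu)))

end Part4

section Part6

theorem ibn_of_ringHom {A F : Type} [Ring A] [Field F] (ε : A →+* F) : InvariantBasisNumber A := by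
  rw [invariantBasisNumber_iff_matrix]
  intro n m f g hfg hgf
  have H := (invariantBasisNumber_iff_matrix (R := F)).1 inferInstance
  refine H n m (f.map ε) (g.map ε) ?_ ?_
  · rw [← Matrix.map_mul, hfg, Matrix.map_one _ (map_zero ε) (map_one ε)]
  · rw [← Matrix.map_mul, hgf, Matrix.map_one _ (map_zero ε) (map_one ε)]

theorem stably_equiv {A : Type} [Ring A] (r D a b : A) (hab : r * a + D * b = 1)
    (hD : ∀ x, D * x = 0 → x = 0) (P : Submodule Aᵐᵒᵖ A)
    (hP : ∀ f, f ∈ P ↔ ∃ v, D * v = r * f) :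
    Nonempty ((P × (Fin 1 → A)) ≃ₗ[Aᵐᵒᵖ] (Fin 2 → A)) := by
  have hmem : ∀ x y, x - a * (r * x + D * y) ∈ P := fun x y => by
    rw [hP]
    refine ⟨b * (r * x + D * y) - y, ?_⟩
    have hra : r * a = 1 - D * b := eq_sub_of_add_eq hab
    rw [mul_sub, mul_sub, ← mul_assoc, ← mul_assoc, hra]
    noncomm_ring
  let F : (Fin 2 → A) →ₗ[Aᵐᵒᵖ] (P × (Fin 1 → A)) :=
    { toFun := fun z => (⟨_, hmem (z 0) (z 1)⟩, fun _ => r * z 0 + D * z 1)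
      map_add' := fun z z' => by
        ext
        · simp; noncomm_ring
        · simp; noncomm_ring
      map_smul' := fun c z => by
        ext
        · simp [sub_mul, add_mul, mul_assoc]
        · simp [add_mul, mul_assoc] }
  refine ⟨(LinearEquiv.ofBijective F ⟨?_, ?_⟩).symm⟩
  · rw [injective_iff_map_eq_zero]
    intro z hz
    have h1 : z 0 - a * (r * z 0 + D * z 1) = 0 := congrArg (fun q => (q.1 : A)) hz
    have h2 : r * z 0 + D * z 1 = 0 := congrArg (fun q => q.2 0) hz
    rw [h2, mul_zero, sub_zero] at h1
    rw [h1, mul_zero, zero_add] at h2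
    have h3 := hD _ h2
    ext i
    fin_cases i
    · exact h1
    · exact h3
  · rintro ⟨⟨f, hf⟩, c⟩
    obtain ⟨v, hv⟩ := (hP f).1 hf
    have key : r * (f + a * c 0) + D * (b * c 0 - v) = c 0 := by
      calc r * (f + a * c 0) + D * (b * c 0 - v)
          = (r * a + D * b) * c 0 + (r * f - D * v) := by noncomm_ring
        _ = c 0 := by rw [hab, hv, one_mul, sub_self, add_zero]
    refine ⟨![f + a * c 0, b * c 0 - v], ?_⟩
    ext i
    · change f + a * c 0 - a * (r * (f + a * c 0) + D * (b * c 0 - v)) = f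
      rw [key, add_sub_cancel_right]
    · change r * (f + a * c 0) + D * (b * c 0 - v) = c i
      rw [key, Subsingleton.elim i 0]

theorem free_principal {A : Type} [Ring A] [InvariantBasisNumber A] (P : Submodule Aᵐᵒᵖ A)
    (e : (P × (Fin 1 → A)) ≃ₗ[Aᵐᵒᵖ] (Fin 2 → A)) (hfree : Module.Free Aᵐᵒᵖ P) :
    ∃ h ∈ P, ∀ f ∈ P, ∃ x, f = h * x := by
  let eA : Aᵐᵒᵖ ≃ₗ[Aᵐᵒᵖ] A :=
    { MulOpposite.opEquiv.symm with
      map_add' := fun _ _ => rfl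
      map_smul' := fun _ _ => rfl }
  let bF : (n : ℕ) → Module.Basis (Fin n) Aᵐᵒᵖ (Fin n → A) := fun n =>
    (Pi.basisFun Aᵐᵒᵖ (Fin n)).map (LinearEquiv.piCongrRight fun _ => eA)
  let b := Module.Free.chooseBasis Aᵐᵒᵖ P
  have hc := mk_eq_mk_of_basis ((b.prod (bF 1)).map e) (bF 2)
  rw [Cardinal.lift_id, Cardinal.lift_id, Cardinal.mk_sum] at hc
  simp only [Cardinal.lift_id, Cardinal.mk_fin, Nat.cast_one, Nat.cast_ofNat] at hc
  have h1 : Cardinal.mk (Module.Free.ChooseBasisIndex Aᵐᵒᵖ P) = 1 := by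
    apply Cardinal.add_one_inj.1
    rw [hc]
    norm_num
  obtain ⟨hs, hne⟩ := Cardinal.eq_one_iff_unique.1 h1
  let hu : Unique (Module.Free.ChooseBasisIndex Aᵐᵒᵖ P) := uniqueOfSubsingleton hne.some
  refine ⟨b default, (b default).2, fun f hf => ?_⟩
  have := b.sum_repr ⟨f, hf⟩
  rw [Fintype.sum_unique] at this
  refine ⟨(b.repr ⟨f, hf⟩ default).unop, ?_⟩
  exact (congrArg Subtype.val this).symm

end Part6

/-- The automorphism `X₀ ↦ λX₀ + X₁`, `X₁ ↦ μX₁`. -/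
def duSigma {K : Type} [Field K] {l μ : K} (hl : l ≠ 0) (hμ : μ ≠ 0) :
    MvPolynomial (Fin 2) K ≃ₐ[K] MvPolynomial (Fin 2) K :=
  AlgEquiv.ofAlgHom
    (MvPolynomial.aeval ![l • MvPolynomial.X 0 + MvPolynomial.X 1, μ • MvPolynomial.X 1])
    (MvPolynomial.aeval ![l⁻¹ • MvPolynomial.X 0 - (l⁻¹ * μ⁻¹) • MvPolynomial.X 1,
      μ⁻¹ • MvPolynomial.X 1])
    (by
      apply MvPolynomial.algHom_ext
      intro i
      fin_cases i
      · simp [smul_smul, hl, hμ]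
      · simp [smul_smul, hl, hμ])
    (by
      apply MvPolynomial.algHom_ext
      intro i
      fin_cases i
      · simp [smul_smul, smul_sub, hl, hμ]
      · simp [smul_smul, hl, hμ])

/-- In `A = A(α,β,0)` with `β ≠ 0` and `λ, μ` the roots of `t² − αt − β`,
set `ω = DU − λUD` and `K' = {f ∈ A : (1 + Uω)f ∈ DA}`. Then
`K' = D²A + (DUω + λ⁻¹μω² + μ²D)A`, and `K'` is a right ideal of `A` that is stably free
but not free as a right `A`-module. -/
theorem downUp_gamma_zero_explicit_ideal
    (K : Type) [Field K] [CharZero K] (α β lam μ : K) (hβ : β ≠ 0)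
    (hsum : lam + μ = α) (hprod : lam * μ = -β) :
    idealK' K α β lam =
      Submodule.span (DownUp K α β 0)ᵐᵒᵖ
        {DownUp.D K α β 0 * DownUp.D K α β 0,
         DownUp.D K α β 0 * DownUp.U K α β 0 * omega0 K α β lam +
           (lam⁻¹ * μ) • (omega0 K α β lam * omega0 K α β lam) +
           (μ ^ 2) • DownUp.D K α β 0} ∧
    IsStablyFreeRight (DownUp K α β 0) (idealK' K α β lam) ∧
    ¬ Module.Free (DownUp K α β 0)ᵐᵒᵖ (idealK' K α β lam) := by
  classical
  have hl : lam ≠ 0 := by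
    rintro rfl
    exact hβ (by simpa using hprod.symm)
  have hμ : μ ≠ 0 := by
    rintro rfl
    exact hβ (by simpa using hprod.symm)
  obtain ⟨r1, r2, r3⟩ := du_rels hsum hprod
  -- the automorphism of the coefficient ring
  let σ : MvPolynomial (Fin 2) K ≃ₐ[K] MvPolynomial (Fin 2) K := duSigma hl hμ
  let _ : MulSemiringAction (Multiplicative ℤ) (MvPolynomial (Fin 2) K) :=
    MulSemiringAction.compHom _ (zpowersHom (MvPolynomial (Fin 2) K ≃ₐ[K] MvPolynomial (Fin 2) K) σ)
  have hact : ∀ (g : Multiplicative ℤ) (f : MvPolynomial (Fin 2) K), g • f =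
      (zpowersHom (MvPolynomial (Fin 2) K ≃ₐ[K] MvPolynomial (Fin 2) K) σ g) f := fun _ _ => rfl
  have _ : SMulCommClass (Multiplicative ℤ) K (MvPolynomial (Fin 2) K) :=
    ⟨fun g c f => by rw [hact, hact, map_smul]⟩
  have h0 : sgen • (MvPolynomial.X 0 : MvPolynomial (Fin 2) K) =
      lam • MvPolynomial.X 0 + MvPolynomial.X 1 := by
    rw [hact]
    simp [σ, duSigma]
  have h1 : sgen • (MvPolynomial.X 1 : MvPolynomial (Fin 2) K) = μ • MvPolynomial.X 1 := by
    rw [hact]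
    simp [σ, duSigma]
  have hreg := du_D_reg hsum hprod h0 h1
  have hnp := du_not_principal hl hμ hsum hprod h0 h1
  have hP : ∀ f, f ∈ idealK' K α β lam ↔
      ∃ v, DownUp.D K α β 0 * v = (1 + DownUp.U K α β 0 * omega0 K α β lam) * f := by
    intro f
    rw [idealK', Submodule.mem_comap, Submodule.mem_span_singleton]
    constructor
    · rintro ⟨v, hv⟩
      exact ⟨v.unop, hv⟩
    · rintro ⟨v, hv⟩
      exact ⟨MulOpposite.op v, hv⟩
  have huni := du_unimod hl hμ r1 r2 r3
  have hDD := du_rD2 hl hμ r1 r2 r3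
  have hg := du_rg hl hμ r1 r2 r3
  have haD := du_aD hl hμ r1 r2 r3
  have har := du_ar hl hμ r1 r2 r3
  obtain ⟨e⟩ := stably_equiv _ _ _ _ huni hreg (idealK' K α β lam) hP
  have hDDm := (hP _).2 ⟨_, hDD.symm⟩
  have hgm := (hP _).2 ⟨_, hg.symm⟩
  refine ⟨?_, ⟨1, 2, ⟨e⟩⟩, ?_⟩
  · apply le_antisymm
    · intro f hf
      obtain ⟨v, hv⟩ := (hP f).1 hf
      have hf2 : f = DownUp.D K α β 0 * DownUp.D K α β 0 *
          ((-(lam⁻¹ * μ⁻¹ ^ 2)) • (DownUp.U K α β 0 * DownUp.U K α β 0) * v) +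
          (DownUp.D K α β 0 * DownUp.U K α β 0 * omega0 K α β lam +
           (lam⁻¹ * μ) • (omega0 K α β lam * omega0 K α β lam) +
           (μ ^ 2) • DownUp.D K α β 0) *
           ((μ⁻¹ ^ 2) • (1 : DownUp K α β 0) * v +
            (lam * μ⁻¹ ^ 4) • (DownUp.U K α β 0 * DownUp.U K α β 0) * f) := by
        have har' := congrArg (· * f) har
        have haD' := congrArg (· * v) haD
        simp only [sub_mul _ _ f, one_mul f] at har'
        simp only [add_mul _ _ v] at haD'
        rw [mul_assoc _ _ v, hv] at haD'
        rw [mul_add, ← mul_assoc, ← mul_assoc, ← mul_assoc, ← add_assoc, ← haD', ← har']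
        simp only [mul_assoc]
        abel
      rw [hf2]
      refine Submodule.add_mem _ ?_ ?_
      · exact Submodule.smul_mem _ (MulOpposite.op _) (Submodule.subset_span (Or.inl rfl))
      · exact Submodule.smul_mem _ (MulOpposite.op _) (Submodule.subset_span (Or.inr rfl))
    · rw [Submodule.span_le]
      rintro x (rfl | rfl)
      · exact hDDm
      · exact hgm
  · intro hfree
    let ε : DownUp K α β 0 →ₐ[K] K := RingQuot.liftAlgHom K ⟨FreeAlgebra.lift K (fun _ => (0 : K)), by
      rintro x y (_ | _) <;> simp⟩
    have := ibn_of_ringHom ε.toRingHom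
    obtain ⟨h, hh, H⟩ := free_principal _ e hfree
    obtain ⟨x, hx⟩ := H _ hDDm
    obtain ⟨y, hy⟩ := H _ hgm
    obtain ⟨v, hv⟩ := (hP _).1 hh
    exact hnp h x y v hx hy hv.symm
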